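/- arXiv:1910.12247 — 2 statements merged into one kernel-verified Lean document; each statement's English description precedes it below -/
import Mathlib

section
/- For a positive integer n ≥ 3, the number of divisors of n is at most 2^{1.6 · ln n / ln ln n}. -/
open Finset in
/-- Local bounds at each prime combine to a bound for the divisor function. -/
lemma log_card_divisors_le_of_forall_prime {n M : ℕ} (hn : n ≠ 0) {ε : ℝ} {w : ℕ → ℝ}
    (hsmall : ∀ p, p.Prime → p < M → ∀ a : ℕ, Real.log (a + 1) ≤ a * (ε * Real.log p) + w p)
    (hlarge : ∀ p, p.Prime → M ≤ p → ∀ a : ℕ, Real.log (a + 1) ≤ a * (ε * Real.log p)) :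
    Real.log (n.divisors.card : ℝ) ≤ ε * Real.log n + ∑ p ∈ M.primesBelow, w p := by
  have hw : ∀ p ∈ M.primesBelow, 0 ≤ w p := fun p hp => by
    simpa using hsmall p (Nat.prime_of_mem_primesBelow hp) (Nat.lt_of_mem_primesBelow hp) 0
  have hlog : Real.log n = ∑ p ∈ n.primeFactors, (n.factorization p : ℝ) * Real.log p := by
    conv_lhs => rw [← Nat.prod_factorization_pow_eq_self hn]
    rw [Finsupp.prod, Nat.support_factorization]
    push_cast
    rw [Real.log_prod fun p hp => by
      have := (Nat.prime_of_mem_primeFactors hp).ne_zero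
      positivity]
    simp
  calc Real.log (n.divisors.card : ℝ)
      = ∑ p ∈ n.primeFactors, Real.log ((n.factorization p : ℝ) + 1) := by
        rw [Nat.card_divisors hn]
        push_cast
        exact Real.log_prod fun p _ => by positivity
    _ ≤ ∑ p ∈ n.primeFactors, ((n.factorization p : ℝ) * (ε * Real.log p) +
          if p ∈ M.primesBelow then w p else 0) := by
        refine sum_le_sum fun p hp => ?_
        have hp' := Nat.prime_of_mem_primeFactors hp
        split_ifs with h
        · exact hsmall p hp' (Nat.lt_of_mem_primesBelow h) _
        · rw [add_zero]
          refine hlarge p hp' ?_ _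
          by_contra! hlt
          exact h (Nat.mem_primesBelow.2 ⟨hlt, hp'⟩)
    _ ≤ ε * Real.log n + ∑ p ∈ M.primesBelow, w p := by
        rw [sum_add_distrib, hlog, mul_sum]
        refine add_le_add (sum_le_sum fun p _ => by linarith) ?_
        rw [← sum_filter, filter_mem_eq_inter]
        exact sum_le_sum_of_subset_of_nonneg inter_subset_right fun p hp _ => hw p hp

/-- The sequence `(a + 1) / r ^ a` is maximal at `b` as soon as it is so among the neighbours. -/
lemma add_one_mul_pow_le {r : ℝ} (hr : 0 < r) {b : ℕ} (hup : (b + 2 : ℝ) ≤ (b + 1) * r)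
    (hdown : b * r ≤ b + 1) (a : ℕ) : ((a : ℝ) + 1) * r ^ b ≤ (b + 1) * r ^ a := by
  have hb : (0 : ℝ) < b + 1 := by positivity
  rcases le_total b a with h | h
  · obtain ⟨m, rfl⟩ := Nat.exists_eq_add_of_le h
    have h1 : 1 + (m : ℝ) * (1 / (b + 1)) ≤ (1 + 1 / (b + 1)) ^ m :=
      one_add_mul_le_pow (le_trans (by norm_num) (by positivity : (0 : ℝ) ≤ 1 / (b + 1))) m
    have h2 : 1 + 1 / ((b : ℝ) + 1) ≤ r := by
      rw [← sub_nonneg]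
      have : r - (1 + 1 / ((b : ℝ) + 1)) = ((b + 1) * r - (b + 2)) / (b + 1) := by
        field_simp; ring
      rw [this]
      exact div_nonneg (by linarith) hb.le
    have h3 := h1.trans (pow_le_pow_left₀ (by positivity) h2 m)
    have h4 : ((b + m : ℕ) : ℝ) + 1 = (b + 1) * (1 + m * (1 / (b + 1))) := by
      push_cast; field_simp; ring
    rw [h4, pow_add, mul_assoc, mul_comm (r ^ b)]
    gcongr
  · obtain ⟨m, rfl⟩ := Nat.exists_eq_add_of_le h
    set B : ℝ := ((a + m : ℕ) : ℝ) + 1 with hB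
    have h1 : 1 + (m : ℝ) * (-(1 / B)) ≤ (1 + -(1 / B)) ^ m := by
      refine one_add_mul_le_pow ?_ m
      have : 1 / B ≤ 1 := by
        rw [div_le_one hb, hB]
        linarith [(Nat.cast_nonneg (a + m) : (0 : ℝ) ≤ ((a + m : ℕ) : ℝ))]
      linarith
    have h2 : (1 + -(1 / B)) * r ≤ 1 := by
      have : (1 + -(1 / B)) * r = ((a + m : ℕ) : ℝ) * r / B := by
        rw [hB]; field_simp; ring
      rw [this, div_le_one hb]
      exact hdown
    have h0 : 0 ≤ (1 + -(1 / B)) * r := by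
      have : 1 + -(1 / B) = ((a + m : ℕ) : ℝ) / B := by rw [hB]; field_simp; ring
      rw [this]; positivity
    have h3 : (1 + (m : ℝ) * (-(1 / B))) * r ^ m ≤ 1 :=
      calc _ ≤ (1 + -(1 / B)) ^ m * r ^ m := by gcongr
        _ = ((1 + -(1 / B)) * r) ^ m := (mul_pow _ _ _).symm
        _ ≤ 1 := pow_le_one₀ h0 h2
    have h4 : (a : ℝ) + 1 = B * (1 + m * (-(1 / B))) := by
      rw [mul_add, mul_neg, mul_neg, mul_one, mul_left_comm, mul_one_div_cancel hb.ne', hB]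
      push_cast; ring
    calc ((a : ℝ) + 1) * r ^ (a + m)
        = B * r ^ a * ((1 + m * (-(1 / B))) * r ^ m) := by rw [h4, pow_add]; ring
      _ ≤ B * r ^ a * 1 := by gcongr
      _ = B * r ^ a := mul_one _

/-- Logarithmic form of `add_one_mul_pow_le` with `r` a `k`-th root of `p`. -/
lemma log_add_one_le {k p b : ℕ} (hk : k ≠ 0) (hp : 0 < p)
    (hup : (b + 2) ^ k ≤ (b + 1) ^ k * p) (hdown : b ^ k * p ≤ (b + 1) ^ k) (a : ℕ) :
    Real.log (a + 1) ≤ a * ((k : ℝ)⁻¹ * Real.log p) +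
      (Real.log (b + 1) - b * ((k : ℝ)⁻¹ * Real.log p)) := by
  set r : ℝ := Real.exp ((k : ℝ)⁻¹ * Real.log p) with hr
  have hp' : (0 : ℝ) < p := by exact_mod_cast hp
  have hr0 : 0 < r := Real.exp_pos _
  have hrk : r ^ k = p := by
    rw [hr, ← Real.exp_nat_mul, ← mul_assoc, mul_inv_cancel₀ (by exact_mod_cast hk), one_mul,
      Real.exp_log hp']
  have h1 : (b + 2 : ℝ) ≤ (b + 1) * r := by
    refine le_of_pow_le_pow_left₀ hk (by positivity) ?_
    rw [mul_pow, hrk]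
    exact_mod_cast hup
  have h2 : b * r ≤ (b + 1 : ℝ) := by
    refine le_of_pow_le_pow_left₀ hk (by positivity) ?_
    rw [mul_pow, hrk]
    exact_mod_cast hdown
  have h := Real.log_le_log (by positivity) (add_one_mul_pow_le hr0 h1 h2 a)
  rw [Real.log_mul (by positivity) (by positivity), Real.log_mul (by positivity) (by positivity),
    Real.log_pow, Real.log_pow, hr, Real.log_exp] at h
  linarith

lemma log_add_one_le_of_two_pow_le {k p : ℕ} (hk : k ≠ 0) (hp : 2 ^ k ≤ p) (a : ℕ) :
    Real.log (a + 1) ≤ a * ((k : ℝ)⁻¹ * Real.log p) := by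
  simpa using log_add_one_le (b := 0) hk (lt_of_lt_of_le (by positivity) hp)
    (by simpa using hp) (by simp [hk]) a

/-- If `b p` maximises `(a + 1) ^ k / p ^ a` for each prime `p`, then `n ↦ d(n) ^ k / n` is maximal
at `∏ p ^ b p`. -/
lemma log_card_divisors_le_of_maximal {n k N D : ℕ} (hn : n ≠ 0) (hk : k ≠ 0) (b : ℕ → ℕ)
    (hb : ∀ p ∈ (2 ^ k).primesBelow,
      (b p + 2) ^ k ≤ (b p + 1) ^ k * p ∧ b p ^ k * p ≤ (b p + 1) ^ k)
    (hN : ∏ p ∈ (2 ^ k).primesBelow, p ^ b p = N)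
    (hD : ∏ p ∈ (2 ^ k).primesBelow, (b p + 1) = D) :
    Real.log (n.divisors.card : ℝ) ≤
      (k : ℝ)⁻¹ * Real.log n + (Real.log D - (k : ℝ)⁻¹ * Real.log N) := by
  have h := log_card_divisors_le_of_forall_prime (M := 2 ^ k) (ε := (k : ℝ)⁻¹)
    (w := fun p => Real.log (b p + 1) - b p * ((k : ℝ)⁻¹ * Real.log p)) hn
    (fun p hp hlt => by
      have := hb p (Nat.mem_primesBelow.2 ⟨hlt, hp⟩)
      exact log_add_one_le hk hp.pos this.1 this.2)
    (fun p _ hle => log_add_one_le_of_two_pow_le hk hle)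
  refine h.trans_eq ?_
  rw [← hN, ← hD]
  push_cast
  rw [Real.log_prod fun p _ => by positivity, Real.log_prod fun p hp => by
    have := (Nat.prime_of_mem_primesBelow hp).ne_zero
    positivity, Finset.mul_sum, ← Finset.sum_sub_distrib]
  congr 1
  refine Finset.sum_congr rfl fun p _ => ?_
  rw [Real.log_pow]
  ring

/-- Converts a bound `log d(n) ≤ ε log n + C` into the desired one, using the tangent to the
logarithm at `2 ^ j`. -/
lemma card_divisors_le_of_log_le {n : ℕ} {ε C : ℝ} (j : ℕ) (hL : 1 < Real.log n)
    (hd : Real.log (n.divisors.card : ℝ) ≤ ε * Real.log n + C)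
    (h : (ε * Real.log n + C) * (j * Real.log 2 + Real.log n / 2 ^ j - 1) ≤
      1.6 * Real.log n * Real.log 2) (h0 : 0 ≤ ε * Real.log n + C) :
    (n.divisors.card : ℝ) ≤ (2 : ℝ) ^ (1.6 * Real.log n / Real.log (Real.log n)) := by
  have hn : n ≠ 0 := by rintro rfl; norm_num at hL
  have hcard : (0 : ℝ) < n.divisors.card := by
    exact_mod_cast Finset.card_pos.2 (Nat.nonempty_divisors.2 hn)
  have hll : 0 < Real.log (Real.log n) := Real.log_pos hL
  have htan : Real.log (Real.log n) ≤ j * Real.log 2 + Real.log n / 2 ^ j - 1 := by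
    have := Real.log_le_sub_one_of_pos (x := Real.log n / 2 ^ j) (by positivity)
    rw [Real.log_div (by positivity) (by positivity), Real.log_pow] at this
    linarith
  rw [Real.le_rpow_iff_log_le hcard (by norm_num)]
  refine hd.trans ?_
  rw [div_mul_eq_mul_div, le_div_iff₀ hll]
  exact (mul_le_mul_of_nonneg_left htan h0).trans h

lemma primeCounting_succ (m : ℕ) :
    (m + 1).primeCounting = m.primeCounting + if (m + 1).Prime then 1 else 0 := by
  simp only [Nat.primeCounting, Nat.primeCounting', Nat.count_succ Nat.Prime (m + 1)]

lemma three_mul_primeCounting_le (m : ℕ) : 3 * m.primeCounting ≤ m + 5 := by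
  have le (m : ℕ) : (m + 1).primeCounting ≤ m.primeCounting + 1 := by
    rw [primeCounting_succ]; split_ifs <;> omega
  have eq {m d : ℕ} (hd : 2 ≤ d) (hlt : d < m + 1) (h : d ∣ m + 1) :
      (m + 1).primeCounting = m.primeCounting := by
    rw [primeCounting_succ, if_neg (Nat.not_prime_of_dvd_of_lt h hd hlt), add_zero]
  have h6 (q : ℕ) : (6 * q + 6).primeCounting = (6 * q + 5).primeCounting :=
    eq (d := 2) (by omega) (by omega) (by omega)
  have h8 (q : ℕ) : (6 * q + 8).primeCounting = (6 * q + 7).primeCounting :=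
    eq (d := 2) (by omega) (by omega) (by omega)
  have h9 (q : ℕ) : (6 * q + 9).primeCounting = (6 * q + 8).primeCounting :=
    eq (d := 3) (by omega) (by omega) (by omega)
  have h10 (q : ℕ) : (6 * q + 10).primeCounting = (6 * q + 9).primeCounting :=
    eq (d := 2) (by omega) (by omega) (by omega)
  have h4 (q : ℕ) : (6 * q + 4).primeCounting ≤ 2 * q + 2 := by
    induction q with
    | zero => decide
    | succ q ih =>
      have := h10 q
      have := h9 q
      have := h8 q
      have := h6 q
      have := le (6 * q + 4)
      have := le (6 * q + 6)
      rw [show 6 * (q + 1) + 4 = 6 * q + 10 by ring]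
      simp only [add_assoc, Nat.reduceAdd] at *
      omega
  rcases lt_or_ge m 4 with hm | hm
  · interval_cases m <;> decide
  · obtain ⟨q, r, hr, rfl⟩ : ∃ q r, r < 6 ∧ m = 6 * q + 4 + r :=
      ⟨(m - 4) / 6, (m - 4) % 6, by omega, by omega⟩
    have := h4 q
    have := h9 q
    have := h8 q
    have := h6 q
    have := le (6 * q + 4)
    have := le (6 * q + 6)
    interval_cases r <;> simp only [add_assoc, Nat.reduceAdd] at * <;> omega


open Finset in
/-- An upper bound for `∑ log (N / p)` over the primes up to `N`. -/
lemma sum_log_sub_log_prime_le {N : ℕ} (hN : 1 ≤ N) :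
    ∑ p ∈ (N + 1).primesBelow, (Real.log N - Real.log p) ≤ N / 3 + 5 / 3 * Real.log N := by
  induction N, hN using Nat.le_induction with
  | base => norm_num [show (1 + 1).primesBelow = ∅ by decide]
  | succ N hN ih =>
    have hN' : (0 : ℝ) < N := by exact_mod_cast hN
    have hsum : ∑ p ∈ (N + 1 + 1).primesBelow, (Real.log (N + 1 : ℕ) - Real.log p) =
        ∑ p ∈ (N + 1).primesBelow, (Real.log (N + 1 : ℕ) - Real.log p) := by
      rw [Nat.primesBelow_succ]
      split_ifs
      · rw [sum_insert (by simp [Nat.mem_primesBelow]), sub_self, zero_add]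
      · rfl
    have hcard : ((N + 1).primesBelow.card : ℝ) ≤ (N + 5) / 3 := by
      have h := three_mul_primeCounting_le N
      rw [Nat.primeCounting, ← Nat.primesBelow_card_eq_primeCounting'] at h
      have : (3 * (N + 1).primesBelow.card : ℝ) ≤ N + 5 := by exact_mod_cast h
      linarith
    have hinc0 : 0 ≤ Real.log (N + 1 : ℕ) - Real.log N :=
      sub_nonneg.2 (Real.log_le_log hN' (by push_cast; linarith))
    have hinc : N * (Real.log (N + 1 : ℕ) - Real.log N) ≤ 1 := by
      have h := Real.log_le_sub_one_of_pos (x := ((N + 1 : ℕ) : ℝ) / N) (by positivity)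
      rw [Real.log_div (by positivity) (by positivity)] at h
      calc _ ≤ N * (((N + 1 : ℕ) : ℝ) / N - 1) := by gcongr
        _ = 1 := by push_cast; field_simp; ring
    have hsplit : ∑ p ∈ (N + 1).primesBelow, (Real.log (N + 1 : ℕ) - Real.log p) =
        ∑ p ∈ (N + 1).primesBelow, (Real.log N - Real.log p) +
          (N + 1).primesBelow.card * (Real.log (N + 1 : ℕ) - Real.log N) := by
      rw [← nsmul_eq_mul, ← sum_const, ← sum_add_distrib]
      exact sum_congr rfl fun p _ => by ring
    rw [hsum, hsplit]
    have := mul_le_mul_of_nonneg_right hcard hinc0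
    push_cast at *
    linarith

/-- The bound at the primes `p < (3 / 2) ^ k`, where exponents larger than one may be optimal. -/
lemma log_add_one_le_of_prime_lt {k p : ℕ} (hk : 8 ≤ k) (hp2 : 2 ≤ p) (hp : p < 2 ^ k) (a : ℕ) :
    Real.log (a + 1) ≤ a * ((k : ℝ)⁻¹ * Real.log p) +
      (Real.log 2 - (k : ℝ)⁻¹ * Real.log p + k / 8) := by
  have hk' : (8 : ℝ) ≤ k := by exact_mod_cast hk
  have hk0 : (0 : ℝ) < k := by linarith
  have hp0 : (0 : ℝ) < p := by exact_mod_cast (by omega : 0 < p)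
  have hl := Real.log_two_gt_d9
  have hu := Real.log_two_lt_d9
  set t := (k : ℝ)⁻¹ * Real.log p with ht
  have ht0 : (k : ℝ)⁻¹ * Real.log 2 ≤ t := by
    rw [ht]; gcongr; exact_mod_cast hp2
  have ht1 : t ≤ Real.log 2 := by
    rw [ht, inv_mul_le_iff₀ hk0, ← Real.log_pow]
    exact Real.log_le_log hp0 (by exact_mod_cast hp.le)
  rcases Nat.eq_zero_or_pos a with rfl | ha
  · simp; linarith
  have ha' : (1 : ℝ) ≤ a := by exact_mod_cast ha
  have h1 := Real.log_le_sub_one_of_pos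
    (x := ((a : ℝ) + 1) * ((k : ℝ)⁻¹ * Real.log 2)) (by positivity)
  rw [Real.log_mul (by positivity) (by positivity),
    Real.log_mul (by positivity) (by positivity), Real.log_inv] at h1
  have h2 := Real.log_le_sub_one_of_pos (x := (k : ℝ) / 8) (by positivity)
  rw [Real.log_div (by positivity) (by norm_num), show (8 : ℝ) = 2 ^ 3 by norm_num,
    Real.log_pow] at h2
  have h3 : -Real.log (Real.log 2) ≤ 0.38 := by
    have h := Real.log_le_sub_one_of_pos (x := (2 * Real.log 2 ^ 2)⁻¹) (by positivity)
    rw [Real.log_inv, Real.log_mul (by norm_num) (by positivity), Real.log_pow] at h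
    have : (2 * Real.log 2 ^ 2)⁻¹ ≤ 1.06 := by
      rw [inv_le_comm₀ (by positivity) (by norm_num)]; norm_num; nlinarith
    push_cast at h
    linarith
  have h4 : (k : ℝ)⁻¹ * Real.log 2 ≤ 0.0867 := by
    rw [inv_mul_le_iff₀ hk0]; linarith
  have h5 := mul_le_mul_of_nonneg_left ht0 (sub_nonneg.2 ha')
  norm_num at *
  linarith

open Finset in
lemma log_card_divisors_le_of_eight_le {n k : ℕ} (hn : n ≠ 0) (hk : 8 ≤ k) :
    Real.log (n.divisors.card : ℝ) ≤ (k : ℝ)⁻¹ * Real.log n + (k : ℝ)⁻¹ * (3 / 4 * 2 ^ k) := by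
  have hk0 : k ≠ 0 := by omega
  have hkR : (0 : ℝ) < k := by exact_mod_cast (by omega : 0 < k)
  have h := log_card_divisors_le_of_forall_prime (M := 2 ^ k) (ε := (k : ℝ)⁻¹)
    (w := fun p => (Real.log 2 - (k : ℝ)⁻¹ * Real.log p) +
      if 2 ^ k * p < 3 ^ k then (k : ℝ) / 8 else 0) hn
    (fun p hp hlt a => by
      split_ifs with hs
      · exact log_add_one_le_of_prime_lt hk hp.two_le hlt a
      · have := log_add_one_le (b := 1) hk0 hp.pos (by simpa using hs) (by simpa using hlt.le) a
        norm_num at this ⊢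
        linarith)
    (fun p _ hle => log_add_one_le_of_two_pow_le hk0 hle)
  refine h.trans ?_
  gcongr
  rw [sum_add_distrib, ← sum_filter, sum_const, nsmul_eq_mul]
  have hmain : ∑ p ∈ Nat.primesBelow (2 ^ k), (Real.log 2 - (k : ℝ)⁻¹ * Real.log p) ≤
      (k : ℝ)⁻¹ * (2 ^ k / 3 + 5 / 3 * (k * Real.log 2)) := by
    have h := sum_log_sub_log_prime_le (N := 2 ^ k) Nat.one_le_two_pow
    rw [Nat.primesBelow_succ, if_neg (Nat.Prime.not_prime_pow (by omega))] at h
    push_cast at h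
    rw [Real.log_pow] at h
    refine le_trans (le_of_eq ?_) (mul_le_mul_of_nonneg_left h (inv_nonneg.2 hkR.le))
    rw [mul_sum]
    exact sum_congr rfl fun p _ => by field_simp
  have hcard : (#{p ∈ Nat.primesBelow (2 ^ k) | 2 ^ k * p < 3 ^ k} : ℝ) ≤ ((3 / 2) ^ k + 5) / 3 := by
    have hsub : ({p ∈ Nat.primesBelow (2 ^ k) | 2 ^ k * p < 3 ^ k} : Finset ℕ) ⊆
        (3 ^ k / 2 ^ k + 1).primesBelow := fun p hp => by
      rw [mem_filter] at hp
      refine Nat.mem_primesBelow.2 ⟨Nat.lt_succ_of_le ?_, Nat.prime_of_mem_primesBelow hp.1⟩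
      rw [Nat.le_div_iff_mul_le (by positivity), mul_comm]
      exact hp.2.le
    have h1 := three_mul_primeCounting_le (3 ^ k / 2 ^ k)
    rw [Nat.primeCounting, ← Nat.primesBelow_card_eq_primeCounting'] at h1
    have h2 : (3 * #{p ∈ Nat.primesBelow (2 ^ k) | 2 ^ k * p < 3 ^ k} : ℝ) ≤
        (3 ^ k / 2 ^ k : ℕ) + 5 := by
      exact_mod_cast (Nat.mul_le_mul_left 3 (card_le_card hsub)).trans h1
    have h3 : ((3 ^ k / 2 ^ k : ℕ) : ℝ) ≤ (3 / 2) ^ k := by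
      rw [div_pow]
      exact_mod_cast Nat.cast_div_le (α := ℝ) (m := 3 ^ k) (n := 2 ^ k)
    linarith
  have hpoly : (40 * k + 5 * k ^ 2 : ℝ) ≤ 5 / 2 * 2 ^ k := by
    clear * - hk
    induction k, hk using Nat.le_induction with
    | base => norm_num
    | succ k hk ih =>
      have : (8 : ℝ) ≤ k := by exact_mod_cast hk
      push_cast
      rw [pow_succ (2 : ℝ)]
      nlinarith
  have hgeom : (k ^ 2 * (3 / 2) ^ k : ℝ) ≤ 15 / 2 * 2 ^ k := by
    clear * - hk
    induction k, hk using Nat.le_induction with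
    | base => norm_num
    | succ k hk ih =>
      have hk8 : (8 : ℝ) ≤ k := by exact_mod_cast hk
      have h1 : (((k + 1 : ℕ) : ℝ) ^ 2 * (3 / 2)) ≤ 2 * k ^ 2 := by push_cast; nlinarith
      calc ((k + 1 : ℕ) : ℝ) ^ 2 * (3 / 2 : ℝ) ^ (k + 1)
          = (((k + 1 : ℕ) : ℝ) ^ 2 * (3 / 2)) * (3 / 2 : ℝ) ^ k := by ring
        _ ≤ 2 * (k : ℝ) ^ 2 * (3 / 2 : ℝ) ^ k := by gcongr
        _ = 2 * ((k : ℝ) ^ 2 * (3 / 2 : ℝ) ^ k) := by ring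
        _ ≤ 2 * (15 / 2 * 2 ^ k : ℝ) := by gcongr
        _ = 15 / 2 * 2 ^ (k + 1) := by ring
  calc _ ≤ (k : ℝ)⁻¹ * (2 ^ k / 3 + 5 / 3 * (k * Real.log 2)) +
        ((3 / 2) ^ k + 5) / 3 * (k / 8) := by gcongr
    _ = (k : ℝ)⁻¹ * (2 ^ k / 3 + 5 / 3 * (k * Real.log 2) +
        (k ^ 2 * (3 / 2) ^ k + 5 * k ^ 2) / 24) := by field_simp; ring
    _ ≤ (k : ℝ)⁻¹ * (3 / 4 * 2 ^ k) := by
        gcongr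
        have : k * Real.log 2 ≤ k * 1 := by
          gcongr
          linarith [Real.log_two_lt_d9]
        linarith

/-- The maximal value of `log d(n) - k⁻¹ log n` in terms of `log 2`. -/
lemma log_card_divisors_le_of_pow_le {n k N D u : ℕ} (hn : n ≠ 0) (hk : k ≠ 0) (b : ℕ → ℕ)
    (hb : ∀ p ∈ (2 ^ k).primesBelow,
      (b p + 2) ^ k ≤ (b p + 1) ^ k * p ∧ b p ^ k * p ≤ (b p + 1) ^ k)
    (hN : ∏ p ∈ (2 ^ k).primesBelow, p ^ b p = N)
    (hD : ∏ p ∈ (2 ^ k).primesBelow, (b p + 1) = D) (hD0 : D ≠ 0) (hN0 : N ≠ 0)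
    (h : D ^ (k * 50) ≤ 2 ^ (k * u) * N ^ 50) :
    Real.log (n.divisors.card : ℝ) ≤ (k : ℝ)⁻¹ * Real.log n + u / 50 * Real.log 2 := by
  refine (log_card_divisors_le_of_maximal hn hk b hb hN hD).trans ?_
  have hkR : (0 : ℝ) < k := by exact_mod_cast hk.bot_lt
  have h' : (D : ℝ) ^ (k * 50) ≤ 2 ^ (k * u) * (N : ℝ) ^ 50 := by exact_mod_cast h
  have := Real.log_le_log (by positivity) h'
  rw [Real.log_mul (by positivity) (by positivity), Real.log_pow, Real.log_pow,
    Real.log_pow] at this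
  push_cast at this
  have h2 : Real.log D - (k : ℝ)⁻¹ * Real.log N - u / 50 * Real.log 2 =
      (k * 50 * Real.log D - (k * u * Real.log 2 + 50 * Real.log N)) / (k * 50) := by
    field_simp
    ring
  have h3 := div_nonpos_of_nonpos_of_nonneg (sub_nonpos.2 this)
    (by positivity : (0 : ℝ) ≤ k * 50)
  linarith

lemma log_card_divisors_le_three {n : ℕ} (hn : n ≠ 0) :
    Real.log (n.divisors.card : ℝ) ≤ 3⁻¹ * Real.log n + 91 / 50 * Real.log 2 := by
  exact_mod_cast log_card_divisors_le_of_pow_le (k := 3) (N := 2520) (D := 48) (u := 91) hn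
    (by norm_num) (fun p => if p = 2 then 3 else if p = 3 then 2 else 1)
    (by decide +kernel) (by decide +kernel) (by decide +kernel)
    (by norm_num) (by norm_num) (by decide +kernel)

lemma log_card_divisors_le_four {n : ℕ} (hn : n ≠ 0) :
    Real.log (n.divisors.card : ℝ) ≤ 4⁻¹ * Real.log n + 154 / 50 * Real.log 2 := by
  exact_mod_cast log_card_divisors_le_of_pow_le (k := 4) (N := 21621600) (D := 576) (u := 154) hn
    (by norm_num) (fun p => if p = 2 then 5 else if p = 3 then 3 else if p = 5 then 2 else 1)
    (by decide +kernel) (by decide +kernel) (by decide +kernel)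
    (by norm_num) (by norm_num) (by decide +kernel)

lemma log_card_divisors_le_five {n : ℕ} (hn : n ≠ 0) :
    Real.log (n.divisors.card : ℝ) ≤ 5⁻¹ * Real.log n + 241 / 50 * Real.log 2 := by
  exact_mod_cast log_card_divisors_le_of_pow_le (k := 5) (N := 6064949221531200) (D := 40320)
    (u := 241) hn (by norm_num)
    (fun p => if p = 2 then 6 else if p = 3 then 4 else if p < 11 then 2 else 1)
    (by decide +kernel) (by decide +kernel) (by decide +kernel)
    (by norm_num) (by norm_num) (by decide +kernel)

lemma log_card_divisors_le_six {n : ℕ} (hn : n ≠ 0) :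
    Real.log (n.divisors.card : ℝ) ≤ 6⁻¹ * Real.log n + 356 / 50 * Real.log 2 := by
  exact_mod_cast log_card_divisors_le_of_pow_le (k := 6) (N := 780296143507862696557498656000)
    (D := 13271040) (u := 356) hn (by norm_num)
    (fun p => if p = 2 then 8 else if p = 3 then 4 else if p = 5 then 3 else if p < 13 then 2 else 1)
    (by decide +kernel) (by decide +kernel) (by decide +kernel)
    (by norm_num) (by norm_num) (by decide +kernel)

/-- A quadratic in `L` which is convex is nonpositive between two points where it is so. -/
lemma mul_le_of_mem_Icc {α C β γ δ A B L : ℝ} (hα : 0 ≤ α) (hβ : 0 ≤ β) (hA : A ≤ L) (hB : L ≤ B)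
    (hAB : A < B) (h1 : (α * A + C) * (γ + A * β - 1) ≤ δ * A)
    (h2 : (α * B + C) * (γ + B * β - 1) ≤ δ * B) :
    (α * L + C) * (γ + L * β - 1) ≤ δ * L := by
  have h3 := mul_le_mul_of_nonneg_left h1 (sub_nonneg.2 hB)
  have h4 := mul_le_mul_of_nonneg_left h2 (sub_nonneg.2 hA)
  have h5 : 0 ≤ α * β * ((L - A) * (B - L) * (B - A)) :=
    mul_nonneg (mul_nonneg hα hβ) (mul_nonneg (mul_nonneg (sub_nonneg.2 hA) (sub_nonneg.2 hB))
      (sub_pos.2 hAB).le)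
  have h6 : 0 ≤ (B - A) * (δ * L - (α * L + C) * (γ + L * β - 1)) := by linarith
  have := nonneg_of_mul_nonneg_right h6 (sub_pos.2 hAB)
  linarith

/-- The tangent criterion on an interval of values of `log n`. -/
lemma card_divisors_le_of_mem_Icc {n : ℕ} {ε q A B : ℝ} (j : ℕ) (hL : 1 < Real.log n)
    (hd : Real.log (n.divisors.card : ℝ) ≤ ε * Real.log n + q * Real.log 2)
    (hε : 0 ≤ ε) (hq : 0 ≤ q) (hA : A ≤ Real.log n) (hB : Real.log n ≤ B) (hAB : A < B)
    (h1 : (ε * A + q * Real.log 2) * (j * Real.log 2 + A * (2 ^ j)⁻¹ - 1) ≤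
      1.6 * Real.log 2 * A)
    (h2 : (ε * B + q * Real.log 2) * (j * Real.log 2 + B * (2 ^ j)⁻¹ - 1) ≤
      1.6 * Real.log 2 * B) :
    (n.divisors.card : ℝ) ≤ (2 : ℝ) ^ (1.6 * Real.log n / Real.log (Real.log n)) := by
  refine card_divisors_le_of_log_le j hL hd ?_ (by positivity)
  have := mul_le_of_mem_Icc hε (by positivity) hA hB hAB h1 h2
  rw [div_eq_mul_inv]
  linarith

lemma card_divisors_le_of_large_log {n : ℕ} (hL : 448 ≤ Real.log n) :
    (n.divisors.card : ℝ) ≤ (2 : ℝ) ^ (1.6 * Real.log n / Real.log (Real.log n)) := by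
  have hn : n ≠ 0 := by rintro rfl; norm_num at hL
  obtain ⟨k, hk1, hk2⟩ := exists_nat_pow_near (x := Real.log n * (4 / 7)) (y := 2)
    (by linarith) (by norm_num)
  have hk : 8 ≤ k := by
    have : (2 : ℝ) ^ 8 < 2 ^ (k + 1) := by linarith
    have := (pow_lt_pow_iff_right₀ (by norm_num : (1 : ℝ) < 2)).1 this
    omega
  have hkR : (8 : ℝ) ≤ k := by exact_mod_cast hk
  have hl := Real.log_two_gt_d9
  have hu := Real.log_two_lt_d9
  refine card_divisors_le_of_log_le (k + 1) (by linarith)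
    (log_card_divisors_le_of_eight_le hn hk) ?_ (by positivity)
  set x : ℝ := 2 ^ k with hx
  have hx0 : 0 < x := by positivity
  obtain ⟨v, hv⟩ : ∃ v, Real.log n = v * x := ⟨Real.log n / x, by field_simp⟩
  rw [pow_succ, ← hx] at hk2 ⊢
  rw [hv] at hk1 hk2 ⊢
  have hv1 : 7 / 4 ≤ v := by
    by_contra! hlt
    nlinarith
  have hv2 : v ≤ 7 / 2 := by
    by_contra! hlt
    nlinarith
  have key : (v + 3 / 4) * (((k + 1 : ℕ) : ℝ) * Real.log 2 + v / 2 - 1) ≤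
      1.6 * v * Real.log 2 * k := by
    push_cast
    have h8 : (v + 3 / 4) * (9 * Real.log 2 + v / 2 - 1) ≤ 1.6 * v * Real.log 2 * 8 := by
      nlinarith
    have hrest : 0 ≤ (k - 8) * Real.log 2 * (0.6 * v - 3 / 4) :=
      mul_nonneg (mul_nonneg (by linarith) (by linarith)) (by linarith)
    nlinarith
  have hk0 : (0 : ℝ) < k := by linarith
  calc _ = (k : ℝ)⁻¹ * x * ((v + 3 / 4) *
        (((k + 1 : ℕ) : ℝ) * Real.log 2 + v / 2 - 1)) := by field_simp
    _ ≤ (k : ℝ)⁻¹ * x * (1.6 * v * Real.log 2 * k) := by gcongr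
    _ = _ := by field_simp

/-- For a positive integer `n ≥ 3`, the number of divisors of `n` is at most
`2^{1.6 ln n / ln ln n}`. -/
theorem divisor_bound (n : ℕ) (hn : 3 ≤ n) :
    (n.divisors.card : ℝ) ≤
      (2 : ℝ) ^ (1.6 * Real.log n / Real.log (Real.log n)) := by
  have hn0 : n ≠ 0 := by omega
  have hl := Real.log_two_gt_d9
  have hu := Real.log_two_lt_d9
  have hL : 1 < Real.log n := by
    rw [Real.lt_log_iff_exp_lt (by positivity)]
    have : (3 : ℝ) ≤ n := by exact_mod_cast hn
    linarith [Real.exp_one_lt_d9]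
  rcases le_total 448 (Real.log n) with h448 | h448
  · exact card_divisors_le_of_large_log h448
  rcases le_total 270 (Real.log n) with h270 | h270
  · exact card_divisors_le_of_mem_Icc 9 hL (log_card_divisors_le_six hn0) (by norm_num)
      (by norm_num) h270 h448 (by norm_num) (by norm_num; nlinarith) (by norm_num; nlinarith)
  rcases le_total 100 (Real.log n) with h100 | h100
  · exact card_divisors_le_of_mem_Icc 7 hL (log_card_divisors_le_six hn0) (by norm_num)
      (by norm_num) h100 h270 (by norm_num) (by norm_num; nlinarith) (by norm_num; nlinarith)
  rcases le_total 35 (Real.log n) with h35 | h35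
  · exact card_divisors_le_of_mem_Icc 6 hL (log_card_divisors_le_five hn0) (by norm_num)
      (by norm_num) h35 h100 (by norm_num) (by norm_num; nlinarith) (by norm_num; nlinarith)
  rcases le_total 23 (Real.log n) with h23 | h23
  · exact card_divisors_le_of_mem_Icc 5 hL (log_card_divisors_le_four hn0) (by norm_num)
      (by norm_num) h23 h35 (by norm_num) (by norm_num; nlinarith) (by norm_num; nlinarith)
  rcases le_total 11 (Real.log n) with h11 | h11
  · exact card_divisors_le_of_mem_Icc 4 hL (log_card_divisors_le_four hn0) (by norm_num)
      (by norm_num) h11 h23 (by norm_num) (by norm_num; nlinarith) (by norm_num; nlinarith)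
  rcases le_total 7 (Real.log n) with h7 | h7
  · exact card_divisors_le_of_mem_Icc 3 hL (log_card_divisors_le_three hn0) (by norm_num)
      (by norm_num) h7 h11 (by norm_num) (by norm_num; nlinarith) (by norm_num; nlinarith)
  · exact card_divisors_le_of_mem_Icc 2 hL (log_card_divisors_le_three hn0) (by norm_num)
      (by norm_num) hL.le h7 (by norm_num) (by norm_num; nlinarith) (by norm_num; nlinarith)
end

section
/- For every c ∈ {0,1}^n and c' ∈ B_k(c), the synchronization vector of c' lies in the 3k-deletion ball of the synchronization vector of c: 1_sync(c') ∈ B_{3k}(1_sync(c)). -/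
/-- There is a run of `⌈log k⌉ + 5` consecutive 1's in `c` starting at (1-based) position `j`. -/
def hasRun (k : ℕ) (c : List Bool) (j : ℕ) : Bool :=
  (List.range (Nat.clog 2 k + 5)).all fun t => c.getD (j + t - 1) false

/-- The window `(c_{i-3k+1}, …, c_{i+⌈log k⌉+4})` is a synchronization pattern: it lies inside
`c`, ends with `⌈log k⌉ + 5` consecutive 1's (starting at position `i`), and no run of
`⌈log k⌉ + 5` consecutive 1's starts at one of the first `3k - 1` window positions
(i.e. at a position `j` with `i - 3k + 1 ≤ j < i`). -/
def syncAt (k : ℕ) (c : List Bool) (i : ℕ) : Bool :=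
  decide (3 * k ≤ i) && decide (i + Nat.clog 2 k + 4 ≤ c.length) && hasRun k c i &&
    ((List.range' (i - 3 * k + 1) (i - (i - 3 * k + 1))).all fun j => !hasRun k c j)

/-- The synchronization vector of `c`: its `i`-th (1-based) entry is 1 iff a synchronization
pattern occurs at position `i`. -/
def syncVec (k : ℕ) (c : List Bool) : List Bool :=
  (List.range c.length).map fun idx => syncAt k c (idx + 1)

/-- The `L` consecutive entries of `f` starting at `x` are all 1. -/
def IsRunAt (L : ℕ) (f : ℕ → Bool) (x : ℕ) : Prop :=
  ∀ t < L, f (x + t) = true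

/-- A run of length `L` starts at `x`, at least `w - 1` entries precede it, and no run starts at
any of the `w - 1` preceding positions. -/
def IsSyncAt (L w : ℕ) (f : ℕ → Bool) (x : ℕ) : Prop :=
  w ≤ x + 1 ∧ IsRunAt L f x ∧ ∀ y < x, x < y + w → ¬ IsRunAt L f y

theorem hasRun_succ_iff (k : ℕ) (c : List Bool) (x : ℕ) :
    hasRun k c (x + 1) = true ↔ IsRunAt (Nat.clog 2 k + 5) (fun i => c.getD i false) x := by
  have h : ∀ t, x + 1 + t - 1 = x + t := fun t => by omega
  simp only [hasRun, IsRunAt, List.all_eq_true, List.mem_range, h]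

theorem IsRunAt.add_le_length {L : ℕ} (hL : 0 < L) {c : List Bool} {x : ℕ}
    (h : IsRunAt L (fun i => c.getD i false) x) : x + L ≤ c.length := by
  have h1 := h (L - 1) (by omega)
  by_contra hlt
  have h2 : c.getD (x + (L - 1)) false = false := by
    rw [List.getD_eq_default]
    omega
  simp only [h2] at h1
  exact absurd h1 (by simp)

theorem syncAt_succ_iff (k : ℕ) (c : List Bool) (x : ℕ) :
    syncAt k c (x + 1) = true ↔
      IsSyncAt (Nat.clog 2 k + 5) (3 * k) (fun i => c.getD i false) x := by
  simp only [syncAt, IsSyncAt, Bool.and_eq_true, decide_eq_true_eq, List.all_eq_true,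
    List.mem_range'_1, hasRun_succ_iff, Bool.not_eq_true']
  constructor
  · rintro ⟨⟨⟨h1, -⟩, h3⟩, h4⟩
    refine ⟨h1, h3, fun y hy hxy hr => ?_⟩
    have := h4 (y + 1) (by omega)
    rw [(hasRun_succ_iff k c y).2 hr] at this
    exact absurd this (by simp)
  · rintro ⟨h1, h3, h4⟩
    have hlen := h3.add_le_length (by omega)
    refine ⟨⟨⟨h1, by omega⟩, h3⟩, fun j hj => ?_⟩
    obtain ⟨y, rfl⟩ : ∃ y, j = y + 1 := ⟨j - 1, by omega⟩
    rw [← Bool.not_eq_true, hasRun_succ_iff]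
    exact h4 y (by omega) (by omega)

/-- A synchronization position is the first position of its block of 1's, so it lies more than
`L` positions after every earlier run. -/
theorem IsSyncAt.eq_of_le {L w : ℕ} (hw : 2 ≤ w) {f : ℕ → Bool} {x y : ℕ}
    (hy : IsSyncAt L w f y) (hx : IsRunAt L f x) (hxy : x ≤ y) (hyx : y ≤ x + L) : x = y := by
  by_contra hne
  refine hy.2.2 (y - 1) (by omega) (by omega) fun t ht => ?_
  rcases Nat.eq_zero_or_pos t with rfl | hpos
  · have := hx (y - 1 - x) (by omega)
    rwa [show x + (y - 1 - x) = y - 1 + 0 by omega] at this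
  · have := hy.2.1 (t - 1) (by omega)
    rwa [show y + (t - 1) = y - 1 + t by omega] at this

section Deletion

variable {L w p : ℕ} {f g : ℕ → Bool}

theorem isRunAt_iff_of_add_le (hlt : ∀ x < p, g x = f x) {x : ℕ} (hx : x + L ≤ p) :
    IsRunAt L g x ↔ IsRunAt L f x := by
  refine forall₂_congr fun t ht => ?_
  rw [hlt _ (by omega)]

theorem isRunAt_iff_succ_of_le (hge : ∀ x, p ≤ x → g x = f (x + 1)) {x : ℕ} (hx : p ≤ x) :
    IsRunAt L g x ↔ IsRunAt L f (x + 1) := by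
  refine forall₂_congr fun t ht => ?_
  rw [hge _ (by omega), show x + t + 1 = x + 1 + t by omega]

theorem isSyncAt_iff_of_add_le (hlt : ∀ x < p, g x = f x) {x : ℕ} (hx : x + L ≤ p) :
    IsSyncAt L w g x ↔ IsSyncAt L w f x := by
  refine and_congr_right fun _ => and_congr (isRunAt_iff_of_add_le hlt hx) ?_
  refine forall₂_congr fun y hy => ?_
  rw [isRunAt_iff_of_add_le hlt (by omega)]

/-- Past the first run after the deleted position, synchronization positions are shifted. -/
theorem isSyncAt_iff_succ_of_lt (hge : ∀ x, p ≤ x → g x = f (x + 1)) {t x : ℕ} (hpt : p ≤ t)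
    (ht : IsRunAt L g t) (hx : t < x) : IsSyncAt L w g x ↔ IsSyncAt L w f (x + 1) := by
  by_cases hxt : x < t + w
  · constructor
    · exact fun h => absurd ht (h.2.2 t hx hxt)
    · exact fun h => absurd ((isRunAt_iff_succ_of_le hge hpt).1 ht)
        (h.2.2 (t + 1) (by omega) (by omega))
  · constructor
    · rintro ⟨h1, h2, h3⟩
      refine ⟨by omega, (isRunAt_iff_succ_of_le hge (by omega)).1 h2, fun y hy hyx hr => ?_⟩
      obtain ⟨z, rfl⟩ : ∃ z, y = z + 1 := ⟨y - 1, by omega⟩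
      exact h3 z (by omega) (by omega) ((isRunAt_iff_succ_of_le hge (by omega)).2 hr)
    · rintro ⟨h1, h2, h3⟩
      refine ⟨by omega, (isRunAt_iff_succ_of_le hge (by omega)).2 h2, fun y hy hyx hr => ?_⟩
      exact h3 (y + 1) (by omega) (by omega) ((isRunAt_iff_succ_of_le hge (by omega)).1 hr)

/-- If a run of `g` straddles the deleted position, the next synchronization position of `g`
comes from one of `f`. -/
theorem IsSyncAt.of_deletion (hlt : ∀ x < p, g x = f x) (hge : ∀ x, p ≤ x → g x = f (x + 1))
    {j t : ℕ} (hjp : j < p) (hpj : p < j + L) (hj : IsRunAt L g j) (hpt : p ≤ t)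
    (ht : IsSyncAt L w g t) : IsSyncAt L w f (t + 1) := by
  obtain ⟨h1, h2, h3⟩ := ht
  refine ⟨by omega, (isRunAt_iff_succ_of_le hge hpt).1 h2, fun y hy hyt hr => ?_⟩
  have hjt : ¬ t < j + w := fun h => h3 j (by omega) h hj
  by_cases hyp : p < y
  · obtain ⟨z, rfl⟩ : ∃ z, y = z + 1 := ⟨y - 1, by omega⟩
    exact h3 z (by omega) (by omega) ((isRunAt_iff_succ_of_le hge (by omega)).2 hr)
  by_cases hyL : y + L ≤ p
  · exact h3 y (by omega) (by omega) ((isRunAt_iff_of_add_le hlt hyL).2 hr)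
  refine h3 (y - 1) (by omega) (by omega) fun s hs => ?_
  by_cases hsp : y - 1 + s < j + L
  · have := hj (y - 1 + s - j) (by omega)
    rwa [show j + (y - 1 + s - j) = y - 1 + s by omega] at this
  · rw [hge _ (by omega), show y - 1 + s + 1 = y + s by omega]
    exact hr s hs

/-- If a run of `f` straddles the deleted position, the next synchronization position of `f`
survives in `g`. -/
theorem IsSyncAt.deletion (hge : ∀ x, p ≤ x → g x = f (x + 1))
    {j t : ℕ} (hjp : j ≤ p) (hpj : p < j + L) (hj : IsRunAt L f j) (hwj : w ≤ j + 1)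
    (hpt : p ≤ t) (ht : IsSyncAt L w f (t + 1)) : IsSyncAt L w g t := by
  obtain ⟨h1, h2, h3⟩ := ht
  have hjt : ¬ t + 1 < j + w := fun h => h3 j (by omega) h hj
  refine ⟨by omega, (isRunAt_iff_succ_of_le hge hpt).2 h2, fun y hy hyt hr => ?_⟩
  by_cases hyp : p ≤ y
  · exact h3 (y + 1) (by omega) (by omega) ((isRunAt_iff_succ_of_le hge hyp).1 hr)
  refine h3 (y + 1) (by omega) (by omega) fun s hs => ?_
  by_cases hsp : y + 1 + s ≤ p
  · have := hj (y + 1 + s - j) (by omega)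
    rwa [show j + (y + 1 + s - j) = y + 1 + s by omega] at this
  · have := hr s hs
    rw [hge _ (by omega)] at this
    rwa [show y + 1 + s = y + s + 1 by omega]

/-- A deletion changes the synchronization positions only inside a window that holds at most one
of them before and at most one after the deletion. -/
theorem exists_window (hL : 0 < L) (hw : 2 ≤ w) (hlt : ∀ x < p, g x = f x)
    (hge : ∀ x, p ≤ x → g x = f (x + 1)) {N : ℕ} (hp : p ≤ N)
    (hN : ∀ x, IsRunAt L g x → x < N) :
    ∃ a b, a ≤ b ∧ b ≤ N ∧ (∀ x < a, IsSyncAt L w f x ↔ IsSyncAt L w g x) ∧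
      (∀ x, b ≤ x → (IsSyncAt L w f (x + 1) ↔ IsSyncAt L w g x)) ∧
      (∀ x y, a ≤ x → x < y → y < b + 1 → IsSyncAt L w f x → ¬ IsSyncAt L w f y) ∧
      (∀ x y, a ≤ x → x < y → y < b → IsSyncAt L w g x → ¬ IsSyncAt L w g y) := by
  classical
  have hleft : ∀ x < p + 1 - L, IsSyncAt L w f x ↔ IsSyncAt L w g x := fun x hx =>
    (isSyncAt_iff_of_add_le hlt (by omega)).symm
  have hclose : ∀ h : ℕ → Bool, ∀ x y, p + 1 - L ≤ x → x < y → y ≤ p → IsSyncAt L w h x →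
      ¬ IsSyncAt L w h y := fun h x y hx hxy hy h1 h2 =>
    absurd (h2.eq_of_le hw h1.2.1 hxy.le (by omega)) hxy.ne
  by_cases hex : ∃ t, p ≤ t ∧ IsRunAt L g t
  · obtain ⟨hpt, ht⟩ := Nat.find_spec hex
    have hmin : ∀ x, p ≤ x → x < Nat.find hex → ¬ IsRunAt L g x := fun x h1 h2 h3 =>
      Nat.find_min hex h2 ⟨h1, h3⟩
    generalize Nat.find hex = t at hpt ht hmin
    have htN := hN t ht
    have hf : ∀ x, p < x → x ≤ t → ¬ IsSyncAt L w f x := fun x h1 h2 h3 => by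
      obtain ⟨z, rfl⟩ : ∃ z, x = z + 1 := ⟨x - 1, by omega⟩
      exact hmin z (by omega) (by omega) ((isRunAt_iff_succ_of_le hge (by omega)).2 h3.2.1)
    have hg : ∀ x, p ≤ x → x < t → ¬ IsSyncAt L w g x := fun x h1 h2 h3 => hmin x h1 h2 h3.2.1
    have hright : ∀ x, t < x → (IsSyncAt L w f (x + 1) ↔ IsSyncAt L w g x) := fun x hx =>
      (isSyncAt_iff_succ_of_lt hge hpt ht hx).symm
    by_cases hboth : IsSyncAt L w f (t + 1) ↔ IsSyncAt L w g t
    · refine ⟨p + 1 - L, t, by omega, by omega, hleft, fun x hx => ?_, ?_, ?_⟩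
      · rcases hx.eq_or_lt with rfl | hx
        · exact hboth
        · exact hright x hx
      · intro x y hx hxy hy h1 h2
        by_cases hyp : y ≤ p
        · exact hclose f x y hx hxy hyp h1 h2
        · exact hf y (by omega) (by omega) h2
      · intro x y hx hxy hy h1 h2
        by_cases hyp : y ≤ p
        · exact hclose g x y hx hxy hyp h1 h2
        · exact hg y (by omega) (by omega) h2
    · refine ⟨p + 1 - L, t + 1, by omega, by omega, hleft, fun x hx => hright x hx, ?_, ?_⟩
      · intro x y hx hxy hy h1 h2
        by_cases hyp : y ≤ p
        · exact hclose f x y hx hxy hyp h1 h2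
        by_cases hyt : y ≤ t
        · exact hf y (by omega) hyt h2
        obtain rfl : y = t + 1 := by omega
        by_cases hxp : x ≤ p
        · have hg' := h2.deletion hge hxp (by omega) h1.2.1 h1.1 hpt
          exact hboth ⟨fun _ => hg', fun _ => h2⟩
        · exact hf x (by omega) (by omega) h1
      · intro x y hx hxy hy h1 h2
        by_cases hyp : y ≤ p
        · exact hclose g x y hx hxy hyp h1 h2
        by_cases hyt : y < t
        · exact hg y (by omega) hyt h2
        obtain rfl : y = t := by omega
        by_cases hxp : x < p
        · have hf' := h2.of_deletion hlt hge hxp (by omega) h1.2.1 hpt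
          exact hboth ⟨fun _ => h2, fun _ => hf'⟩
        · exact hg x (by omega) (by omega) h1
  · push Not at hex
    have hg : ∀ x, p ≤ x → ¬ IsSyncAt L w g x := fun x h1 h2 => hex x h1 h2.2.1
    have hf : ∀ x, p ≤ x → ¬ IsSyncAt L w f (x + 1) := fun x h1 h2 =>
      hex x h1 ((isRunAt_iff_succ_of_le hge h1).2 h2.2.1)
    refine ⟨p + 1 - L, N, by omega, le_rfl, hleft, fun x hx => ?_, ?_, ?_⟩
    · exact iff_of_false (hf x (by omega)) (hg x (by omega))
    · intro x y hx hxy _ h1 h2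
      by_cases hyp : y ≤ p
      · exact hclose f x y hx hxy hyp h1 h2
      · obtain ⟨z, rfl⟩ : ∃ z, y = z + 1 := ⟨y - 1, by omega⟩
        exact hf z (by omega) h2
    · intro x y hx hxy _ h1 h2
      by_cases hyp : y ≤ p
      · exact hclose g x y hx hxy hyp h1 h2
      · exact hg y (by omega) h2

end Deletion

theorem replicate_false_sublist_map_range' (s : ℕ → Bool) (a n : ℕ)
    (h : ∀ x y, a ≤ x → x < y → y < a + n → s x = true → ¬ s y = true) :
    (List.replicate (n - 1) false).Sublist ((List.range' a n).map s) := by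
  induction n generalizing a with
  | zero => simp
  | succ n ih =>
    rw [List.range'_succ, List.map_cons, Nat.add_sub_cancel]
    by_cases hs : s a = true
    · refine List.Sublist.cons _ ?_
      rw [List.eq_replicate_of_mem (l := (List.range' (a + 1) n).map s) (a := false)]
      · simp
      · intro b hb
        obtain ⟨y, hy, rfl⟩ := List.mem_map.1 hb
        rw [List.mem_range'_1] at hy
        simpa using h a y le_rfl (by omega) (by omega) hs
    · rw [Bool.not_eq_true] at hs
      rw [hs]
      have := ih (a + 1) fun x y hx hxy hy => h x y (by omega) hxy (by omega)
      cases n with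
      | zero => simp
      | succ n => exact this.cons_cons false

/-- Two Boolean vectors of lengths `N + 1` and `N` that agree, up to a shift, outside a window
holding at most one 1 of each have a common subsequence of length at least `N - 1`. -/
theorem exists_common_sublist_of_window (s t : ℕ → Bool) {a b N : ℕ} (hab : a ≤ b) (hbN : b ≤ N)
    (hleft : ∀ x < a, s x = t x) (hright : ∀ x, b ≤ x → s (x + 1) = t x)
    (hs : ∀ x y, a ≤ x → x < y → y < b + 1 → s x = true → ¬ s y = true)
    (ht : ∀ x y, a ≤ x → x < y → y < b → t x = true → ¬ t y = true) :
    ∃ d : List Bool, d.Sublist ((List.range (N + 1)).map s) ∧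
      d.Sublist ((List.range N).map t) ∧ N ≤ d.length + 1 := by
  have hsplit : ∀ m, b ≤ m → m ≤ b + 1 → ∀ M, m ≤ M → List.range M =
      List.range' 0 a ++ List.range' a (m - a) ++ List.range' m (M - m) := by
    intro m h1 h2 M h3
    have e1 := @List.range'_append_1 0 a (m - a)
    have e2 := @List.range'_append_1 0 m (M - m)
    rw [Nat.zero_add] at e1 e2
    rw [e1, show a + (m - a) = m by omega, e2, List.range_eq_range']
    congr 1
    omega
  have hP : (List.range' 0 a).map s = (List.range' 0 a).map t := by
    refine List.map_congr_left fun x hx => hleft x ?_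
    rw [List.mem_range'_1] at hx
    omega
  have hQ : (List.range' (b + 1) (N - b)).map s = (List.range' b (N - b)).map t := by
    refine List.ext_getElem (by simp) fun i h1 h2 => ?_
    simp only [List.getElem_map, List.getElem_range', one_mul]
    rw [show b + 1 + i = b + i + 1 by omega]
    exact hright _ (by omega)
  refine ⟨(List.range' 0 a).map t ++ List.replicate (b - a - 1) false ++
    (List.range' b (N - b)).map t, ?_, ?_, ?_⟩
  · rw [hsplit (b + 1) (by omega) le_rfl (N + 1) (by omega), List.map_append, List.map_append, hP,
      show N + 1 - (b + 1) = N - b by omega, hQ]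
    refine ((List.Sublist.refl _).append ?_).append (List.Sublist.refl _)
    refine List.Sublist.trans ?_ (replicate_false_sublist_map_range' s a (b + 1 - a)
      fun x y h1 h2 h3 => hs x y h1 h2 (by omega))
    exact List.replicate_sublist_replicate false |>.2 (by omega)
  · rw [hsplit b le_rfl (by omega) N hbN, List.map_append, List.map_append]
    refine ((List.Sublist.refl _).append ?_).append (List.Sublist.refl _)
    exact replicate_false_sublist_map_range' t a (b - a)
      fun x y h1 h2 h3 => ht x y h1 h2 (by omega)
  · simp only [List.length_append, List.length_map, List.length_range', List.length_replicate]
    omega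

theorem length_syncVec (k : ℕ) (c : List Bool) : (syncVec k c).length = c.length := by
  simp [syncVec]

/-- A single deletion causes at most two deletions and one insertion in the synchronization
vector. -/
theorem exists_common_sublist_syncVec_eraseIdx {k : ℕ} (hk : 1 ≤ k) (c : List Bool) {p : ℕ}
    (hp : p < c.length) :
    ∃ d : List Bool, d.Sublist (syncVec k c) ∧ d.Sublist (syncVec k (c.eraseIdx p)) ∧
      c.length ≤ d.length + 2 := by
  have hlen : (c.eraseIdx p).length = c.length - 1 := List.length_eraseIdx_of_lt hp
  have hlt : ∀ x < p, (c.eraseIdx p).getD x false = c.getD x false := fun x hx => by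
    simp [List.getD_eq_getElem?_getD, List.getElem?_eraseIdx, hx]
  have hge : ∀ x, p ≤ x → (c.eraseIdx p).getD x false = c.getD (x + 1) false := fun x hx => by
    simp [List.getD_eq_getElem?_getD, List.getElem?_eraseIdx, Nat.not_lt.2 hx]
  obtain ⟨a, b, hab, hbN, h1, h2, h3, h4⟩ := exists_window (L := Nat.clog 2 k + 5) (w := 3 * k)
    (f := fun i => c.getD i false) (g := fun i => (c.eraseIdx p).getD i false) (by omega)
    (by omega) hlt hge (N := c.length - 1) (by omega) fun x hx => by
      have := hx.add_le_length (by omega)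
      omega
  simp only [← syncAt_succ_iff] at h1 h2 h3 h4
  obtain ⟨d, hd1, hd2, hd3⟩ := exists_common_sublist_of_window (fun x => syncAt k c (x + 1))
    (fun x => syncAt k (c.eraseIdx p) (x + 1)) hab hbN (fun x hx => Bool.eq_iff_iff.2 (h1 x hx))
    (fun x hx => Bool.eq_iff_iff.2 (h2 x hx)) h3 h4
  refine ⟨d, ?_, ?_, by omega⟩
  · rwa [show c.length - 1 + 1 = c.length by omega] at hd1
  · rwa [← hlen] at hd2

theorem exists_common_sublist_of_sublist {α : Type*} {u v y : List α} (hu : u.Sublist y)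
    (hv : v.Sublist y) :
    ∃ d : List α, d.Sublist u ∧ d.Sublist v ∧ u.length + v.length ≤ d.length + y.length := by
  induction y generalizing u v with
  | nil =>
    obtain rfl := List.sublist_nil.1 hu
    exact ⟨[], List.nil_sublist _, List.nil_sublist _, by simp [List.sublist_nil.1 hv]⟩
  | cons a y ih =>
    rcases List.sublist_cons_iff.1 hu with hu' | ⟨u, rfl, hu'⟩ <;>
    rcases List.sublist_cons_iff.1 hv with hv' | ⟨v, rfl, hv'⟩ <;>
    obtain ⟨d, h1, h2, h3⟩ := ih hu' hv'
    · exact ⟨d, h1, h2, by simp only [List.length_cons]; omega⟩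
    · exact ⟨d, h1, h2.cons a, by simp only [List.length_cons]; omega⟩
    · exact ⟨d, h1.cons a, h2, by simp only [List.length_cons]; omega⟩
    · exact ⟨a :: d, h1.cons_cons a, h2.cons_cons a, by simp only [List.length_cons]; omega⟩

theorem exists_sublist_eraseIdx {α : Type*} {d c : List α} (h : d.Sublist c)
    (hlen : d.length < c.length) : ∃ p < c.length, d.Sublist (c.eraseIdx p) := by
  induction h with
  | slnil => simp at hlen
  | cons a h _ => exact ⟨0, by simp, by simpa using h⟩
  | cons_cons a _ ih =>
    obtain ⟨p, hp, h⟩ := ih (by simpa using hlen)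
    exact ⟨p + 1, by simpa using hp, by simpa using h⟩

/-- `r` deletions cause at most `2 * r` deletions and `r` insertions in the synchronization
vector. -/
theorem exists_common_sublist_syncVec_of_sublist {k : ℕ} (hk : 1 ≤ k) {d : List Bool} (r : ℕ)
    {c : List Bool} (h : d.Sublist c) (hr : c.length = d.length + r) :
    ∃ v : List Bool, v.Sublist (syncVec k c) ∧ v.Sublist (syncVec k d) ∧
      c.length ≤ v.length + 2 * r := by
  induction r generalizing c with
  | zero =>
    obtain rfl := h.eq_of_length hr.symm
    exact ⟨_, List.Sublist.refl _, List.Sublist.refl _, by simp [length_syncVec]⟩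
  | succ r ih =>
    obtain ⟨p, hp, hd⟩ := exists_sublist_eraseIdx h (by omega)
    have hlen : (c.eraseIdx p).length = c.length - 1 := List.length_eraseIdx_of_lt hp
    obtain ⟨u, hu1, hu2, hu3⟩ := exists_common_sublist_syncVec_eraseIdx hk c hp
    obtain ⟨v, hv1, hv2, hv3⟩ := ih hd (by omega)
    obtain ⟨x, hx1, hx2, hx3⟩ := exists_common_sublist_of_sublist hu2 hv1
    rw [length_syncVec] at hx3
    exact ⟨x, hx1.trans hu1, hx2.trans hv2, by omega⟩

/-- For every `c ∈ {0,1}^n` and `c' ∈ B_k(c)`, the synchronization vector of `c'` lies in the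
`3k`-deletion ball of the synchronization vector of `c`. -/
theorem syncVec_in_ball (n k : ℕ) (hk : 1 ≤ k) (c c' : List Bool)
    (hc : c.length = n) (hc' : c'.length = n)
    (hball : ∃ d : List Bool, d.length = n - k ∧ d.Sublist c ∧ d.Sublist c') :
    ∃ d : List Bool, d.length = n - 3 * k ∧
      d.Sublist (syncVec k c) ∧ d.Sublist (syncVec k c') := by
  obtain ⟨e, he, hec, hec'⟩ := hball
  obtain ⟨u, hu1, hu2, hu3⟩ :=
    exists_common_sublist_syncVec_of_sublist hk (n - e.length) hec (by omega)
  obtain ⟨v, hv1, hv2, hv3⟩ :=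
    exists_common_sublist_syncVec_of_sublist hk (n - e.length) hec' (by omega)
  obtain ⟨x, hx1, hx2, hx3⟩ := exists_common_sublist_of_sublist hu2 hv2
  rw [length_syncVec] at hx3
  refine ⟨x.take (n - 3 * k), ?_, (List.take_sublist _ _).trans (hx1.trans hu1),
    (List.take_sublist _ _).trans (hx2.trans hv1)⟩
  rw [List.length_take]
  omega
end
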